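/- arXiv:2302.07098 — 3 statements merged into one kernel-verified Lean document; each statement's English description precedes it below -/
import Mathlib

section
/- Let β ∈ ℝ be such that β/π is irrational, let α ∈ ℝ, and let k be a nonnegative integer. Then lim_{N→∞} (1/N^{k+1}) Σ_{n=1}^{N} n^k cos(α n + β n²) = 0 and lim_{N→∞} (1/N^{k+1}) Σ_{n=1}^{N} n^k sin(α n + β n²) = 0. -/
open Filter Finset

open Asymptotics
open scoped RealInnerProductSpace ComplexConjugate

/-! Van der Corput's difference theorem: in a real inner product space, replacing a bounded sequence
by its averages over windows of fixed length `H` barely changes its partial sums, while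
Cauchy–Schwarz bounds the squared norms of the averaged sums by the diagonal contribution, of
relative size `1 / H`, plus the correlations `∑ ⟪u n, u (n + h)⟫` with `h ≠ 0`. If these are all
`o(N)`, so are the partial sums. For the chirp `exp (i (α n + β n²))` the correlations are geometric
sums with ratio `exp (2 i β h)`, which is not `1` because `β / π` is irrational. Summation by parts
then brings in the weight `n ^ k`. -/

section Cesaro

variable {E : Type*} [NormedAddCommGroup E] {u : ℕ → E} {B : ℝ}

theorem norm_sum_sq_le_card_mul_sum_norm_sq {ι : Type*} (s : Finset ι) (v : ι → E) :
    ‖∑ i ∈ s, v i‖ ^ 2 ≤ #s * ∑ i ∈ s, ‖v i‖ ^ 2 :=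
  (pow_le_pow_left₀ (norm_nonneg _) (norm_sum_le _ _) 2).trans sq_sum_le_card_mul_sum_sq

theorem isLittleO_natCast_of_norm_le (hu : ∀ n, ‖u n‖ ≤ B) :
    u =o[atTop] (fun N : ℕ => (N : ℝ)) := by
  have one_isLittleO : (fun _ : ℕ => (1 : ℝ)) =o[atTop] (fun N : ℕ => (N : ℝ)) :=
    (isLittleO_const_id_atTop (1 : ℝ)).natCast_atTop
  exact (isBigO_one_nat_atTop_iff.2 ⟨B, hu⟩).trans_isLittleO one_isLittleO

theorem isLittleO_sum_range_sub_sum_range_add (hu : ∀ n, ‖u n‖ ≤ B) (h : ℕ) :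
    (fun N => ∑ n ∈ range N, u n - ∑ n ∈ range N, u (n + h)) =o[atTop]
      (fun N : ℕ => (N : ℝ)) := by
  have sub_shift_eq (N : ℕ) : ∑ n ∈ range N, u n - ∑ n ∈ range N, u (n + h) =
      ∑ n ∈ range h, (u n - u (N + n)) := by
    have split_at_N := sum_range_add u N h
    have split_at_h := sum_range_add u h N
    simp only [add_comm h] at split_at_h
    rw [sum_sub_distrib, sub_eq_sub_iff_add_eq_add, ← split_at_N, split_at_h]
  simp only [sub_shift_eq]
  refine IsLittleO.fun_sum fun n _ => isLittleO_natCast_of_norm_le (B := B + B) fun N => ?_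
  exact (norm_sub_le _ _).trans (add_le_add (hu n) (hu (N + n)))

theorem isLittleO_nsmul_sum_range_sub_sum_sum_add (hu : ∀ n, ‖u n‖ ≤ B) (H : ℕ) :
    (fun N => H • ∑ n ∈ range N, u n - ∑ n ∈ range N, ∑ h ∈ range H, u (n + h)) =o[atTop]
      (fun N : ℕ => (N : ℝ)) := by
  refine (IsLittleO.fun_sum (s := range H) fun h _ =>
    isLittleO_sum_range_sub_sum_range_add hu h).congr_left fun N => ?_
  rw [sum_sub_distrib, sum_const, card_range, sum_comm]

theorem isLittleO_sum_range_of_isLittleO_pow {p : ℕ}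
    (hu : u =o[atTop] (fun n : ℕ => (n : ℝ) ^ p)) :
    (fun N => ∑ n ∈ range N, u n) =o[atTop] (fun N : ℕ => (N : ℝ) ^ (p + 1)) := by
  have not_summable : ¬ Summable (fun n : ℕ => (n : ℝ) ^ p) := by
    simp only [← Real.rpow_natCast, Real.summable_nat_rpow, not_lt]
    linarith [Nat.cast_nonneg (α := ℝ) p]
  have natCast_pow_nonneg (n : ℕ) : (0 : ℝ) ≤ (n : ℝ) ^ p := by positivity
  have sum_pow_le (N : ℕ) : ‖∑ n ∈ range N, (n : ℝ) ^ p‖ ≤ (N : ℝ) ^ (p + 1) := by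
    rw [Real.norm_of_nonneg (sum_nonneg fun n _ => natCast_pow_nonneg n)]
    calc ∑ n ∈ range N, (n : ℝ) ^ p ≤ ∑ _n ∈ range N, (N : ℝ) ^ p := by
          gcongr with n hn
          exact (mem_range.1 hn).le
      _ = (N : ℝ) ^ (p + 1) := by rw [sum_const, card_range, nsmul_eq_mul, pow_succ']
  have tendsto_sum_pow :=
    (not_summable_iff_tendsto_nat_atTop_of_nonneg natCast_pow_nonneg).1 not_summable
  exact (hu.sum_range natCast_pow_nonneg tendsto_sum_pow).trans_isBigO (.of_norm_le sum_pow_le)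

end Cesaro

theorem sum_Icc_natCast_smul {R M : Type*} [Ring R] [AddCommGroup M] [Module R M] (a : ℕ → M)
    (N : ℕ) :
    ∑ n ∈ Icc 1 N, (n : R) • a n =
      (N : R) • ∑ n ∈ Icc 1 N, a n - ∑ m ∈ range N, ∑ n ∈ Icc 1 m, a n := by
  induction N with
  | zero => simp
  | succ N ih =>
    rw [sum_Icc_succ_top (by lia), sum_Icc_succ_top (by lia), sum_range_succ, ih]
    simp only [Nat.cast_succ, add_smul, smul_add, one_smul]
    abel

theorem isLittleO_sum_Icc_pow_smul {E : Type*} [NormedAddCommGroup E] [NormedSpace ℝ E]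
    {a : ℕ → E}
    (ha : (fun N : ℕ => ∑ n ∈ Icc 1 N, a n) =o[atTop] (fun N : ℕ => (N : ℝ))) (k : ℕ) :
    (fun N : ℕ => ∑ n ∈ Icc 1 N, (n : ℝ) ^ k • a n) =o[atTop]
      (fun N : ℕ => (N : ℝ) ^ (k + 1)) := by
  induction k with
  | zero => simpa using ha
  | succ k ih =>
    simp only [pow_succ' _ k, mul_smul, sum_Icc_natCast_smul]
    refine IsLittleO.sub ?_ (isLittleO_sum_range_of_isLittleO_pow ih)
    simpa only [pow_succ' _ (k + 1), smul_eq_mul] using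
      (isBigO_refl (fun N : ℕ => (N : ℝ)) atTop).smul_isLittleO ih

section VanDerCorput

variable {E : Type*} [NormedAddCommGroup E] [InnerProductSpace ℝ E] {u : ℕ → E} {B : ℝ}

theorem norm_sum_sq_eq_sum_norm_sq_add_sum_offDiag {ι : Type*} (s : Finset ι) (v : ι → E) :
    ‖∑ i ∈ s, v i‖ ^ 2 = ∑ i ∈ s, ‖v i‖ ^ 2 + ∑ p ∈ s.offDiag, ⟪v p.1, v p.2⟫ := by
  classical
  simp only [← real_inner_self_eq_norm_sq, sum_inner, inner_sum]
  rw [sum_comm, ← sum_product', ← diag_union_offDiag, sum_union (disjoint_diag_offDiag s),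
    sum_diag]

theorem isLittleO_sum_inner_add_add (hu : ∀ n, ‖u n‖ ≤ B)
    (hcorr : ∀ h ≠ 0, (fun N => ∑ n ∈ range N, ⟪u n, u (n + h)⟫) =o[atTop]
      (fun N : ℕ => (N : ℝ))) {i j : ℕ} (hij : i ≠ j) :
    (fun N => ∑ n ∈ range N, ⟪u (n + i), u (n + j)⟫) =o[atTop] (fun N : ℕ => (N : ℝ)) := by
  wlog hlt : i < j generalizing i j
  · simpa only [real_inner_comm] using this hij.symm (by lia)
  obtain ⟨d, rfl⟩ := Nat.exists_eq_add_of_le hlt.le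
  have inner_bounded (n : ℕ) : ‖⟪u n, u (n + d)⟫‖ ≤ B * B :=
    (norm_inner_le_norm _ _).trans
      (mul_le_mul (hu _) (hu _) (norm_nonneg _) ((norm_nonneg _).trans (hu 0)))
  refine ((hcorr d (by lia)).sub
    (isLittleO_sum_range_sub_sum_range_add inner_bounded i)).congr_left fun N => ?_
  simp only [sub_sub_cancel, add_assoc]

theorem eventually_sum_norm_sq_sum_add_le (hu : ∀ n, ‖u n‖ ≤ B)
    (hcorr : ∀ h ≠ 0, (fun N => ∑ n ∈ range N, ⟪u n, u (n + h)⟫) =o[atTop]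
      (fun N : ℕ => (N : ℝ))) (H : ℕ) :
    ∀ᶠ N : ℕ in atTop,
      ∑ n ∈ range N, ‖∑ h ∈ range H, u (n + h)‖ ^ 2 ≤ (H * B ^ 2 + 1) * N := by
  have offDiag_isLittleO :
      (fun N => ∑ p ∈ (range H).offDiag, ∑ n ∈ range N, ⟪u (n + p.1), u (n + p.2)⟫)
        =o[atTop] (fun N : ℕ => (N : ℝ)) :=
    IsLittleO.fun_sum fun p hp => isLittleO_sum_inner_add_add hu hcorr (mem_offDiag.1 hp).2.2
  filter_upwards [offDiag_isLittleO.bound one_pos] with N hN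
  have diag_le : ∑ n ∈ range N, ∑ h ∈ range H, ‖u (n + h)‖ ^ 2 ≤ H * B ^ 2 * N :=
    calc ∑ n ∈ range N, ∑ h ∈ range H, ‖u (n + h)‖ ^ 2
        ≤ ∑ _n ∈ range N, ∑ _h ∈ range H, B ^ 2 := by
          gcongr
          exact hu _
      _ = H * B ^ 2 * N := by simp only [sum_const, card_range, nsmul_eq_mul]; ring
  have offDiag_le := (le_abs_self _).trans hN
  rw [Real.norm_of_nonneg N.cast_nonneg] at offDiag_le
  simp only [norm_sum_sq_eq_sum_norm_sq_add_sum_offDiag, sum_add_distrib]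
  rw [sum_comm (s := range N) (t := (range H).offDiag)]
  linarith

theorem isLittleO_sum_range_of_isLittleO_sum_inner (hu : ∀ n, ‖u n‖ ≤ B)
    (hcorr : ∀ h ≠ 0, (fun N => ∑ n ∈ range N, ⟪u n, u (n + h)⟫) =o[atTop]
      (fun N : ℕ => (N : ℝ))) :
    (fun N => ∑ n ∈ range N, u n) =o[atTop] (fun N : ℕ => (N : ℝ)) := by
  refine isLittleO_iff.2 fun ε hε => ?_
  obtain ⟨H, hH⟩ := exists_nat_ge ((B ^ 2 + 1) / (ε / 2) ^ 2 + 1)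
  have one_le_H : (1 : ℝ) ≤ H := le_trans (le_add_of_nonneg_left (by positivity)) hH
  have H_large : B ^ 2 + 1 ≤ (ε / 2) ^ 2 * H := by
    rw [← div_le_iff₀' (by positivity)]
    linarith
  filter_upwards [eventually_sum_norm_sq_sum_add_le hu hcorr H,
    (isLittleO_nsmul_sum_range_sub_sum_sum_add hu H).bound (half_pos hε)] with N hsq hdiff
  set S := ∑ n ∈ range N, u n
  set T := ∑ n ∈ range N, ∑ h ∈ range H, u (n + h)
  rw [Real.norm_of_nonneg N.cast_nonneg] at hdiff ⊢
  have norm_T_le : ‖T‖ ≤ ε / 2 * H * N := by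
    refine le_of_sq_le_sq ?_ (by positivity)
    calc ‖T‖ ^ 2 ≤ N * ∑ n ∈ range N, ‖∑ h ∈ range H, u (n + h)‖ ^ 2 := by
          simpa only [card_range] using norm_sum_sq_le_card_mul_sum_norm_sq (range N) _
      _ ≤ N * ((H * B ^ 2 + 1) * N) := by gcongr
      _ ≤ N * (H * (B ^ 2 + 1) * N) := by gcongr; linarith
      _ ≤ N * (H * ((ε / 2) ^ 2 * H) * N) := by gcongr
      _ = (ε / 2 * H * N) ^ 2 := by ring
  have H_mul_norm_S_le : H * ‖S‖ ≤ H * (ε * N) :=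
    calc (H : ℝ) * ‖S‖ = ‖H • S‖ := by
          rw [← Nat.cast_smul_eq_nsmul ℝ, norm_smul, Real.norm_natCast]
      _ ≤ ‖T‖ + ‖H • S - T‖ := norm_le_norm_add_norm_sub' _ _
      _ ≤ ε / 2 * H * N + ε / 2 * N := add_le_add norm_T_le hdiff
      _ ≤ ε / 2 * H * N + ε / 2 * (H * N) := by
          gcongr
          exact le_mul_of_one_le_left N.cast_nonneg one_le_H
      _ = H * (ε * N) := by ring
  exact le_of_mul_le_mul_left H_mul_norm_S_le (by linarith)

end VanDerCorput

theorem isLittleO_geom_sum {𝕜 : Type*} [NormedDivisionRing 𝕜] {w : 𝕜} (hw : ‖w‖ ≤ 1)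
    (hw1 : w ≠ 1) : (fun N => ∑ n ∈ range N, w ^ n) =o[atTop] (fun N : ℕ => (N : ℝ)) := by
  refine isLittleO_natCast_of_norm_le (B := (1 + 1) / ‖w - 1‖) fun N => ?_
  rw [geom_sum_eq hw1, norm_div]
  gcongr
  refine (norm_sub_le _ _).trans ?_
  rw [norm_pow, norm_one]
  gcongr
  exact pow_le_one₀ (norm_nonneg w) hw

section Chirp

/-- The chirp (quadratic-phase) signal `exp (i (α t + β t²))`, whose real and imaginary parts are
the cosine and sine of the theorem. -/
noncomputable def chirp (α β t : ℝ) : ℂ :=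
  Complex.exp ((α * t + β * t ^ 2 : ℝ) * Complex.I)

variable {α β : ℝ}

theorem norm_chirp (t : ℝ) : ‖chirp α β t‖ = 1 :=
  Complex.norm_exp_ofReal_mul_I _

theorem chirp_re (t : ℝ) : (chirp α β t).re = Real.cos (α * t + β * t ^ 2) :=
  Complex.exp_ofReal_mul_I_re _

theorem chirp_im (t : ℝ) : (chirp α β t).im = Real.sin (α * t + β * t ^ 2) :=
  Complex.exp_ofReal_mul_I_im _

theorem chirp_add_mul_conj_chirp (h : ℝ) (n : ℕ) :
    chirp α β (n + h) * conj (chirp α β n) =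
      chirp α β h * Complex.exp ((2 * β * h : ℝ) * Complex.I) ^ n := by
  simp only [chirp, ← Complex.exp_conj, ← Complex.exp_nat_mul, ← Complex.exp_add, map_mul,
    Complex.conj_ofReal, Complex.conj_I]
  push_cast
  ring_nf

theorem exp_two_mul_mul_I_ne_one (hβ : Irrational (β / Real.pi)) {h : ℕ} (hh : h ≠ 0) :
    Complex.exp ((2 * β * h : ℝ) * Complex.I) ≠ 1 := by
  intro hexp
  obtain ⟨m, hm⟩ := Complex.exp_eq_one_iff.1 hexp
  have phase_eq : 2 * β * h = m * (2 * Real.pi) := by simpa using congrArg Complex.im hm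
  refine (hβ.mul_natCast hh).ne_int m ?_
  field_simp
  linarith

theorem isLittleO_sum_inner_chirp (hβ : Irrational (β / Real.pi)) {h : ℕ} (hh : h ≠ 0) :
    (fun N => ∑ n ∈ range N, ⟪chirp α β n, chirp α β (n + h : ℕ)⟫) =o[atTop]
      (fun N : ℕ => (N : ℝ)) := by
  have geom := (isLittleO_geom_sum (Complex.norm_exp_ofReal_mul_I _).le
    (exp_two_mul_mul_I_ne_one hβ hh)).const_mul_left (chirp α β h)
  refine (IsBigO.of_norm_le fun N => ?_).trans_isLittleO geom.norm_left
  simp only [Nat.cast_add, Complex.inner, chirp_add_mul_conj_chirp, ← Complex.re_sum, ← mul_sum]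
  exact Complex.abs_re_le_norm _

theorem isLittleO_sum_Icc_chirp (hβ : Irrational (β / Real.pi)) :
    (fun N : ℕ => ∑ n ∈ Icc 1 N, chirp α β n) =o[atTop] (fun N : ℕ => (N : ℝ)) := by
  have norm_le (n : ℕ) : ‖chirp α β n‖ ≤ 1 := (norm_chirp _).le
  have sum_range_isLittleO :=
    isLittleO_sum_range_of_isLittleO_sum_inner norm_le
      fun _ hh => isLittleO_sum_inner_chirp (α := α) hβ hh
  refine (sum_range_isLittleO.sub
    (isLittleO_sum_range_sub_sum_range_add norm_le 1)).congr_left fun N => ?_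
  rw [sub_sub_cancel, range_eq_Ico, sum_Ico_add' (fun n : ℕ => chirp α β n)]
  rfl

theorem tendsto_weighted_chirp_sum (hβ : Irrational (β / Real.pi)) (k : ℕ) :
    Tendsto (fun N : ℕ => (1 / (N : ℝ) ^ (k + 1)) • ∑ n ∈ Icc 1 N, (n : ℝ) ^ k • chirp α β n)
      atTop (nhds 0) := by
  simpa only [one_div] using
    (isLittleO_sum_Icc_pow_smul (isLittleO_sum_Icc_chirp hβ) k).tendsto_inv_smul_nhds_zero

end Chirp

/-- Weighted chirp trigonometric sum limits: if `β / π` is irrational, then the normalized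
weighted sums of `cos (α n + β n²)` and `sin (α n + β n²)` tend to `0`. -/
theorem statement_4 (β : ℝ) (hβ : Irrational (β / Real.pi)) (α : ℝ) (k : ℕ) :
    Tendsto (fun N : ℕ =>
        (1 / (N : ℝ) ^ (k + 1)) *
          ∑ n ∈ Finset.Icc 1 N, (n : ℝ) ^ k * Real.cos (α * n + β * n ^ 2))
      atTop (nhds 0) ∧
    Tendsto (fun N : ℕ =>
        (1 / (N : ℝ) ^ (k + 1)) *
          ∑ n ∈ Finset.Icc 1 N, (n : ℝ) ^ k * Real.sin (α * n + β * n ^ 2))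
      atTop (nhds 0) := by
  have chirp_limit := tendsto_weighted_chirp_sum (α := α) hβ k
  constructor
  · simpa only [Function.comp_def, Complex.smul_re, Complex.re_sum, chirp_re, smul_eq_mul,
      Complex.zero_re] using (Complex.continuous_re.tendsto 0).comp chirp_limit
  · simpa only [Function.comp_def, Complex.smul_im, Complex.im_sum, chirp_im, smul_eq_mul,
      Complex.zero_im] using (Complex.continuous_im.tendsto 0).comp chirp_limit
end

section
/- Let A, B ∈ ℝ with A² + B² > 0, and set s = A² + B². Then the symmetric 4×4 real matrix M = [[1, 0, B/2, B/3], [0, 1, −A/2, −A/3], [B/2, −A/2, s/3, s/4], [B/3, −A/3, s/4, s/5]] is positive definite. -/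
/-!
For a signal with amplitudes `A`, `B` and a phase that is a linear combination of powers
`t ^ k i`, the Schur complement of the amplitude block of the limiting Hessian is `A² + B²` times
the covariance matrix of the functions `t ^ k i` on `[0, 1]`. With `x i = k i + 1/2` the second
moments of these functions form the Cauchy matrix `1 / (x i + x j)`, and their covariance matrix is
the Schur complement of the entry at `1/2` in the Cauchy matrix of the points `1/2` and `x i`. Such
a Schur complement is diagonally congruent to the Cauchy matrix of the remaining points. This makes
Cauchy matrices positive definite, by induction on the number of points, and then the covariance
matrix as well.
-/

open Matrix

section SchurComplement

variable {R m n : Type*} [CommRing R] [PartialOrder R] [IsOrderedAddMonoid R] [StarRing R]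
  [Fintype m] [DecidableEq m] [Finite n]

theorem posDef_fromBlocks_of_posDef_schurComplement {A : Matrix m m R} (B : Matrix m n R)
    (D : Matrix n n R) (hA : A.PosDef) (hA_unit : IsUnit A)
    (hS : (D - Bᴴ * A⁻¹ * B).PosDef) : (fromBlocks A B Bᴴ D).PosDef := by
  let : Invertible A := hA_unit.invertible
  have := Fintype.ofFinite n
  refine .of_dotProduct_mulVec_pos ((IsHermitian.fromBlocks₁₁ B D hA.1).2 hS.1) fun z hz ↦ ?_
  obtain ⟨x, y, rfl⟩ : ∃ x y, z = Sum.elim x y := ⟨_, _, (Sum.elim_comp_inl_inr z).symm⟩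
  rw [dotProduct_mulVec, schur_complement_eq₁₁ B D x y hA.1, ← dotProduct_mulVec,
    ← dotProduct_mulVec]
  obtain rfl | hy := eq_or_ne y 0
  · have hx : x ≠ 0 := by
      rintro rfl
      exact hz Sum.elim_zero_zero
    simpa using hA.dotProduct_mulVec_pos hx
  · exact add_pos_of_nonneg_of_pos (hA.posSemidef.dotProduct_mulVec_nonneg _)
      (hS.dotProduct_mulVec_pos hy)

end SchurComplement

variable {K m ι : Type*} [Field K] {x : ι → K} {a : K}

/-- The symmetric Cauchy matrix of a family of points `x`, with entries `1 / (x i + x j)`. For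
`x i = k i + 1/2` it is the matrix of second moments of the functions `t ^ k i` on `[0, 1]`. -/
def cauchyMatrix (x : ι → K) : Matrix ι ι K :=
  of fun i j ↦ (x i + x j)⁻¹

theorem cauchyMatrix_sub_smul_vecMulVec [Fintype ι] [DecidableEq ι] (hxa : ∀ i, x i + a ≠ 0)
    (hx : ∀ i j, x i + x j ≠ 0) :
    cauchyMatrix x - (2 * a) • vecMulVec (fun i ↦ (x i + a)⁻¹) (fun i ↦ (x i + a)⁻¹) =
      diagonal (fun i ↦ (x i - a) / (x i + a)) * cauchyMatrix x *
        diagonal (fun i ↦ (x i - a) / (x i + a)) := by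
  ext i j
  have hi := hxa i
  have hj := hxa j
  have hij := hx i j
  simp only [cauchyMatrix, Matrix.sub_apply, Matrix.smul_apply, of_apply, vecMulVec_apply,
    smul_eq_mul, mul_diagonal, diagonal_mul]
  field_simp
  ring

/-- The limit of the scaled Hessian of the least squares criterion for a signal whose phase is a
linear combination of the powers `t ^ k i`. Its quadratic form at `(y, z)` is the integral over
`[0, 1]` of the squared norm of `y + (∑ i, z i * t ^ k i) • w`; the signal
`A cos φ + B sin φ` corresponds to `w = (B, -A)`. -/
def polynomialPhaseHessian [Fintype m] [DecidableEq m] [StarRing K] (w : m → K) (k : ι → K) :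
    Matrix (m ⊕ ι) (m ⊕ ι) K :=
  fromBlocks 1 (vecMulVec w fun i ↦ (k i + 1)⁻¹) (vecMulVec (fun i ↦ (k i + 1)⁻¹) (star w))
    ((star w ⬝ᵥ w) • of fun i j ↦ (k i + k j + 1)⁻¹)

variable [PartialOrder K] [StarRing K] [StarOrderedRing K]

theorem inv_pos_of_starOrderedRing (ha : 0 < a) : 0 < a⁻¹ := by
  have h := star_left_conjugate_pos ha (IsRegular.of_ne_zero (inv_ne_zero ha.ne'))
  rwa [(IsSelfAdjoint.of_nonneg ha.le).inv₀.star_eq, inv_mul_cancel₀ ha.ne', one_mul] at h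

theorem posDef_cauchyMatrix_sub_smul_vecMulVec [Finite ι] (ha : 0 < a) (hx : ∀ i, 0 < x i)
    (hxa : ∀ i, x i ≠ a) (h : (cauchyMatrix x).PosDef) :
    (cauchyMatrix x -
      (2 * a) • vecMulVec (fun i ↦ (x i + a)⁻¹) (fun i ↦ (x i + a)⁻¹)).PosDef := by
  classical
  have := Fintype.ofFinite ι
  set d : ι → K := fun i ↦ (x i - a) / (x i + a) with d_def
  have hd : IsUnit (diagonal d) := isUnit_diagonal.2 <| Pi.isUnit_iff.2 fun i ↦
    (div_ne_zero (sub_ne_zero.2 (hxa i)) (add_pos (hx i) ha).ne').isUnit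
  have hd_star : star (diagonal d) = diagonal d :=
    isHermitian_diagonal_of_self_adjoint d <| funext fun i ↦
      ((IsSelfAdjoint.of_nonneg (hx i).le).sub (.of_nonneg ha.le)).div
        ((IsSelfAdjoint.of_nonneg (hx i).le).add (.of_nonneg ha.le))
  rw [cauchyMatrix_sub_smul_vecMulVec (fun i ↦ (add_pos (hx i) ha).ne')
    (fun i j ↦ (add_pos (hx i) (hx j)).ne'), ← d_def]
  nth_rw 1 [← hd_star]
  exact (IsUnit.posDef_star_left_conjugate_iff hd).2 h

theorem posDef_cauchyMatrix_sumElim [Finite ι] (ha : 0 < a) (hx : ∀ i, 0 < x i)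
    (hxa : ∀ i, x i ≠ a) (h : (cauchyMatrix x).PosDef) :
    (cauchyMatrix (Sum.elim (fun _ : Unit ↦ a) x)).PosDef := by
  set P : Matrix Unit Unit K := diagonal fun _ ↦ (2 * a)⁻¹
  set B : Matrix Unit ι K := of fun _ i ↦ (x i + a)⁻¹
  have ha2 : 0 < 2 * a := mul_pos two_pos ha
  have hP : P.PosDef := .diagonal fun _ ↦ inv_pos_of_starOrderedRing ha2
  have hP_inv : P⁻¹ = diagonal fun _ ↦ 2 * a := inv_eq_left_inv <| by
    rw [diagonal_mul_diagonal, mul_inv_cancel₀ ha2.ne', diagonal_one]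
  have hB : Bᴴ = of fun i _ ↦ (x i + a)⁻¹ := by
    ext i _
    exact ((IsSelfAdjoint.of_nonneg (hx i).le).add (.of_nonneg ha.le)).inv₀
  have h_blocks : cauchyMatrix (Sum.elim (fun _ : Unit ↦ a) x) =
      fromBlocks P B Bᴴ (cauchyMatrix x) := by
    rw [hB]
    ext (i | i) (j | j) <;> simp [cauchyMatrix, P, B, two_mul, add_comm]
  have h_schur : cauchyMatrix x - Bᴴ * P⁻¹ * B = cauchyMatrix x -
      (2 * a) • vecMulVec (fun i ↦ (x i + a)⁻¹) (fun i ↦ (x i + a)⁻¹) := by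
    rw [hB, hP_inv]
    ext i j
    simp [B, mul_apply, vecMulVec_apply]
    ring
  rw [h_blocks]
  refine posDef_fromBlocks_of_posDef_schurComplement B _ hP hP.isUnit ?_
  rw [h_schur]
  exact posDef_cauchyMatrix_sub_smul_vecMulVec ha hx hxa h

theorem posDef_cauchyMatrix [Finite ι] (hx : ∀ i, 0 < x i) (hx_inj : Function.Injective x) :
    (cauchyMatrix x).PosDef := by
  induction ι using Finite.induction_empty_option with
  | of_equiv e ih =>
    have h := ih (x := x ∘ e) (fun i ↦ hx (e i)) (hx_inj.comp e.injective)
    simpa [cauchyMatrix, submatrix] using h.submatrix e.symm.injective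
  | h_empty => exact .of_dotProduct_mulVec_pos (Subsingleton.elim _ _) fun z hz ↦
      (hz (Subsingleton.elim z 0)).elim
  | @h_option α _ ih =>
    let e : Option α ≃ Unit ⊕ α := (Equiv.optionEquivSumPUnit α).trans (Equiv.sumComm α Unit)
    have h := posDef_cauchyMatrix_sumElim (hx none) (fun i ↦ hx (some i))
      (fun i ↦ hx_inj.ne (Option.some_ne_none i))
      (ih (fun i ↦ hx (some i)) (hx_inj.comp (Option.some_injective α)))
    have h_points : Sum.elim (fun _ : Unit ↦ x none) (fun i ↦ x (some i)) ∘ e = x := by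
      ext (_ | i) <;> rfl
    rw [← h_points]
    exact h.submatrix e.injective

theorem posDef_cauchyMatrix_sub_vecMulVec_add_half [Finite ι] {k : ι → K}
    (hk : ∀ i, -(1 / 2) < k i) (hk_zero : ∀ i, k i ≠ 0) (hk_inj : Function.Injective k) :
    ((of fun i j ↦ (k i + k j + 1)⁻¹) -
      vecMulVec (fun i ↦ (k i + 1)⁻¹) (fun i ↦ (k i + 1)⁻¹)).PosDef := by
  have h_half : (0 : K) < 1 / 2 := by
    rw [one_div]
    exact inv_pos_of_starOrderedRing two_pos
  have hx : ∀ i, 0 < k i + 1 / 2 := fun i ↦ neg_lt_iff_pos_add.1 (hk i)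
  have h_moment : ∀ b c : K, b + 1 / 2 + (c + 1 / 2) = b + c + 1 := fun b c ↦ by
    rw [add_add_add_comm, add_halves]
  have h_mean : ∀ b : K, b + 1 / 2 + 1 / 2 = b + 1 := fun b ↦ by
    rw [add_assoc, add_halves]
  have h := posDef_cauchyMatrix_sub_smul_vecMulVec h_half hx (by simpa using hk_zero)
    (posDef_cauchyMatrix hx ((add_left_injective _).comp hk_inj))
  simpa only [cauchyMatrix, h_moment, h_mean, mul_one_div_cancel (two_ne_zero' K), one_smul] using h

theorem statement_10_general [Fintype m] [DecidableEq m] [Finite ι] {w : m → K} {k : ι → K}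
    (hw : w ≠ 0) (hk : ∀ i, -(1 / 2) < k i) (hk_zero : ∀ i, k i ≠ 0)
    (hk_inj : Function.Injective k) :
    (polynomialPhaseHessian w k).PosDef := by
  let u : ι → K := fun i ↦ (k i + 1)⁻¹
  let H : Matrix ι ι K := of fun i j ↦ (k i + k j + 1)⁻¹
  have h_cov : (H - vecMulVec u u).PosDef :=
    posDef_cauchyMatrix_sub_vecMulVec_add_half hk hk_zero hk_inj
  have hu_star : star u = u := funext fun i ↦ by
    have h : IsSelfAdjoint (k i + 1 / 2 + 2⁻¹) :=
      (IsSelfAdjoint.of_nonneg (neg_lt_iff_pos_add.1 (hk i)).le).add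
        (.of_nonneg (inv_pos_of_starOrderedRing two_pos).le)
    rw [add_assoc, ← one_div, add_halves] at h
    exact h.inv₀
  have h_adj : vecMulVec u (star w) = (vecMulVec w u)ᴴ := by
    rw [conjTranspose_vecMulVec, hu_star]
  have h_schur : (star w ⬝ᵥ w) • H - (vecMulVec w u)ᴴ * (1 : Matrix m m K)⁻¹ * vecMulVec w u =
      (star w ⬝ᵥ w) • (H - vecMulVec u u) := by
    rw [← h_adj, inv_one, Matrix.mul_one, vecMulVec_mul_vecMulVec, vecMulVec_smul, smul_sub]
  have h_blocks : polynomialPhaseHessian w k =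
      fromBlocks 1 (vecMulVec w u) (vecMulVec w u)ᴴ ((star w ⬝ᵥ w) • H) := by
    rw [← h_adj]
    rfl
  rw [h_blocks]
  refine posDef_fromBlocks_of_posDef_schurComplement _ _ .one isUnit_one ?_
  rw [h_schur]
  exact h_cov.smul (dotProduct_star_self_pos_iff.2 hw)

theorem submatrix_polynomialPhaseHessian_chirp (A B : ℝ) :
    (polynomialPhaseHessian ![B, -A] ![1, 2]).submatrix
        ![.inl 0, .inl 1, .inr 0, .inr 1] ![.inl 0, .inl 1, .inr 0, .inr 1] =
      !![1, 0, B / 2, B / 3;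
         0, 1, -A / 2, -A / 3;
         B / 2, -A / 2, (A ^ 2 + B ^ 2) / 3, (A ^ 2 + B ^ 2) / 4;
         B / 3, -A / 3, (A ^ 2 + B ^ 2) / 4, (A ^ 2 + B ^ 2) / 5] := by
  ext i j
  fin_cases i <;> fin_cases j <;>
    norm_num [polynomialPhaseHessian, vecMulVec_apply, -cons_vecMulVec, -vecMulVec_cons] <;>
    ring

/-- The limiting scaled Hessian of the mono-component chirp least squares criterion is
positive definite. -/
theorem statement_10 (A B : ℝ) (hs : 0 < A ^ 2 + B ^ 2)
    (M : Matrix (Fin 4) (Fin 4) ℝ)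
    (hM : M = !![1, 0, B / 2, B / 3;
                 0, 1, -A / 2, -A / 3;
                 B / 2, -A / 2, (A ^ 2 + B ^ 2) / 3, (A ^ 2 + B ^ 2) / 4;
                 B / 3, -A / 3, (A ^ 2 + B ^ 2) / 4, (A ^ 2 + B ^ 2) / 5]) :
    M.PosDef := by
  have hw : ![B, -A] ≠ 0 := by
    intro h
    obtain ⟨rfl, rfl⟩ : B = 0 ∧ A = 0 := by simpa using h
    simp at hs
  have hk_inj : Function.Injective (![1, 2] : Fin 2 → ℝ) := by
    simp [Function.Injective, Fin.forall_fin_two]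
  rw [hM, ← submatrix_polynomialPhaseHessian_chirp]
  exact (statement_10_general hw (by norm_num [Fin.forall_fin_two]) (by simp [Fin.forall_fin_two])
    hk_inj).submatrix (by decide)
end

section
/- Let p ≥ 1 and let s : {1,…,p} → ℝ with s_k > 0 for all k. Then the symmetric (p+1)×(p+1) real matrix S with S_{kk} = s_k/12 and S_{k,p+1} = S_{p+1,k} = s_k/12 for k ≤ p, S_{p+1,p+1} = (4/45) Σ_{k=1}^{p} s_k, and S_{kj} = 0 for distinct k, j ≤ p, is positive definite. -/
/-!
Put `w k = s k / 12`. Then `S` is the arrowhead matrix with diagonal block `diagonal w`, border `w`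
and last diagonal entry `c = 4 / 45 * ∑ k, s k`. Completing the square in the first block,
positivity of `S` reduces to positivity of the `1 × 1` Schur complement
`c - ∑ k, w k = (4 / 45 - 1 / 12) * ∑ k, s k`, and `4 / 45 - 1 / 12 = 1 / 180 > 0`.
-/

open Finset

section

open Matrix

theorem posDef_iff_of_unique {R n : Type*} [Ring R] [StarRing R] [PartialOrder R]
    [StarOrderedRing R] [NoZeroDivisors R] [Nontrivial R] [Unique n] {M : Matrix n n R} :
    M.PosDef ↔ 0 < M default default := by
  have M_eq_diagonal : M = diagonal fun i => M i i := by
    ext i j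
    simp [Subsingleton.elim j i]
  rw [M_eq_diagonal, posDef_diagonal_iff, Unique.forall_iff, diagonal_apply_eq]

/-- The Hermitian arrowhead matrix with leading diagonal `d`, border column `b` and last diagonal
entry `c`: only its diagonal, last row and last column may be nonzero. The last index is the element
of `Fin 1`, so that the matrix is literally a block matrix. -/
def arrowhead {R n : Type*} [Zero R] [Star R] [DecidableEq n] (d b : n → R) (c : R) :
    Matrix (n ⊕ Fin 1) (n ⊕ Fin 1) R :=
  fromBlocks (diagonal d) (replicateCol (Fin 1) b) (replicateCol (Fin 1) b)ᴴ !![c]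

variable {K m n : Type*} [Field K] [StarRing K] [PartialOrder K] [StarOrderedRing K]
  [Fintype n] [DecidableEq n]

theorem posDef_fromBlocks₁₁_iff [Finite m] {A : Matrix n n K} (B : Matrix n m K)
    (D : Matrix m m K) (hA : A.PosDef) :
    (fromBlocks A B Bᴴ D).PosDef ↔ (D - Bᴴ * A⁻¹ * B).PosDef := by
  have := Fintype.ofFinite m
  let := hA.isUnit.invertible
  have complete_square (u : n → K) (v : m → K) :
      star (Sum.elim u v) ⬝ᵥ (fromBlocks A B Bᴴ D *ᵥ Sum.elim u v) =
        star (u + (A⁻¹ * B) *ᵥ v) ⬝ᵥ (A *ᵥ (u + (A⁻¹ * B) *ᵥ v)) +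
          star v ⬝ᵥ ((D - Bᴴ * A⁻¹ * B) *ᵥ v) := by
    simpa only [dotProduct_mulVec] using schur_complement_eq₁₁ B D u v hA.isHermitian
  rw [posDef_iff_dotProduct_mulVec, posDef_iff_dotProduct_mulVec,
    IsHermitian.fromBlocks₁₁ B D hA.isHermitian]
  refine and_congr_right fun _ => ⟨fun h v hv => ?_, fun h x hx => ?_⟩
  · have elim_ne_zero : Sum.elim (-((A⁻¹ * B) *ᵥ v)) v ≠ 0 := fun h0 =>
      hv <| congrArg (· ∘ Sum.inr) h0
    simpa only [complete_square, neg_add_cancel, mulVec_zero, dotProduct_zero, zero_add]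
      using h elim_ne_zero
  · obtain ⟨u, v, rfl⟩ : ∃ u v, x = Sum.elim u v := ⟨_, _, (Sum.elim_comp_inl_inr x).symm⟩
    rw [complete_square]
    obtain rfl | hv := eq_or_ne v 0
    · have hu : u ≠ 0 := by
        rintro rfl
        exact hx Sum.elim_zero_zero
      simpa only [mulVec_zero, add_zero, dotProduct_zero] using hA.dotProduct_mulVec_pos hu
    · exact add_pos_of_nonneg_of_pos (hA.posSemidef.dotProduct_mulVec_nonneg _) (h hv)

theorem posDef_arrowhead_iff {d b : n → K} {c : K} (hd : ∀ i, 0 < d i) :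
    (arrowhead d b c).PosDef ↔ ∑ i, star (b i) * (d i)⁻¹ * b i < c := by
  have inv_diagonal_d : (diagonal d)⁻¹ = diagonal fun i => (d i)⁻¹ :=
    inv_eq_left_inv <| by simp [fun i => (hd i).ne']
  rw [arrowhead, posDef_fromBlocks₁₁_iff _ _ (.diagonal hd), posDef_iff_of_unique,
    inv_diagonal_d, Matrix.sub_apply, sub_pos, Matrix.mul_apply]
  simp only [mul_diagonal, conjTranspose_apply, replicateCol_apply, of_apply, cons_val',
    cons_val_fin_one]

theorem posDef_arrowhead_self_iff {w : n → K} {c : K} (hw : ∀ i, 0 < w i) :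
    (arrowhead w w c).PosDef ↔ ∑ i, w i < c := by
  have star_mul_inv_mul_self (i : n) : star (w i) * (w i)⁻¹ * w i = w i := by
    rw [inv_mul_cancel_right₀ (hw i).ne', (IsSelfAdjoint.of_nonneg (hw i).le).star_eq]
  simp only [posDef_arrowhead_iff hw, star_mul_inv_mul_self]

end

/-- The Schur complement `S` appearing in the limiting covariance matrix of the scaled gradient
of the least squares criterion for the `p`-component equal-chirp-rate model is positive
definite. -/
theorem statement_14 (p : ℕ) (hp : 1 ≤ p) (s : ℕ → ℝ) (hs : ∀ k, 0 < s k)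
    (S : Matrix (Fin (p + 1)) (Fin (p + 1)) ℝ)
    (hS : ∀ i j, S i j =
      if i.val = j.val then
        (if i.val < p then s i.val / 12 else 4 / 45 * ∑ k ∈ Finset.range p, s k)
      else if j.val = p then s i.val / 12
      else if i.val = p then s j.val / 12
      else 0) :
    S.PosDef := by
  let w : Fin p → ℝ := fun k => s k / 12
  have hw : ∀ k, 0 < w k := fun k => div_pos (hs k) (by norm_num)
  have hsum : 0 < ∑ k ∈ Finset.range p, s k :=
    sum_pos (fun k _ => hs k) (nonempty_range_iff.2 (by lia))
  have S_eq : S = (arrowhead w w (4 / 45 * ∑ k ∈ Finset.range p, s k)).reindex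
      finSumFinEquiv finSumFinEquiv := by
    rw [← Equiv.symm_apply_eq]
    ext (i | i) (j | j)
    · simp [hS, arrowhead, w, Matrix.diagonal_apply, Fin.ext_iff, i.isLt.ne, j.isLt.ne]
    · simp [hS, arrowhead, w, i.isLt.ne]
    · simp [hS, arrowhead, w, j.isLt.ne, j.isLt.ne']
    · simp [hS, arrowhead]
  rw [S_eq]
  refine ((posDef_arrowhead_self_iff hw).2 ?_).submatrix finSumFinEquiv.symm.injective
  calc ∑ k, w k
    _ = 1 / 12 * ∑ k ∈ Finset.range p, s k := by
        rw [← Fin.sum_univ_eq_sum_range, ← sum_div, one_div_mul_eq_div]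
    _ < 4 / 45 * ∑ k ∈ Finset.range p, s k := by linarith
end
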